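/- arXiv:2104.14001 — 2 statements merged into one kernel-verified Lean document; each statement's English description precedes it below -/
import Mathlib

section
/- Let b, f_1,…,f_n, and g_{j,i} (1 ≤ j ≤ n, 1 ≤ i ≤ m) be real polynomials in n variables, and define p_b := Σ_{j=1}^n (∂b/∂x_j)·f_j and q_{b,i} := Σ_{j=1}^n (∂b/∂x_j)·g_{j,i}. Suppose there exist polynomials η, θ_1,…,θ_m, sum-of-squares polynomials α_0, α_1, and a positive integer r such that the polynomial identity η·b + Σ_{i=1}^m θ_i·q_{b,i} + α_0 − α_1·p_b + p_b^{2r} = 0 holds. Then there is no x ∈ ℝ^n satisfying b(x) = 0, q_{b,i}(x) = 0 for all i = 1,…,m, and p_b(x) < 0; consequently, for every x ∈ ℝ^n with b(x) = 0 there exists u ∈ ℝ^m such that p_b(x) + Σ_{i=1}^m q_{b,i}(x)·u_i ≥ 0. -/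
open MvPolynomial

/-- A multivariate real polynomial is a sum of squares. -/
def IsSOS {n : ℕ} (p : MvPolynomial (Fin n) ℝ) : Prop :=
  ∃ (k : ℕ) (g : Fin k → MvPolynomial (Fin n) ℝ), p = ∑ i, (g i) ^ 2

theorem IsSOS.eval_nonneg_aux {n : ℕ} {p : MvPolynomial (Fin n) ℝ} (h : IsSOS p)
    (x : Fin n → ℝ) : 0 ≤ eval x p := by
  obtain ⟨k, g, rfl⟩ := h
  rw [map_sum]
  refine Finset.sum_nonneg fun i _ => ?_
  rw [map_pow]
  exact sq_nonneg _

/-- Theorem 3, soundness direction of the SOS certificate (2) for CBF verification. -/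
theorem cbf_sos_certificate_sound
    (n m : ℕ)
    (b : MvPolynomial (Fin n) ℝ)
    (f : Fin n → MvPolynomial (Fin n) ℝ)
    (g : Fin n → Fin m → MvPolynomial (Fin n) ℝ)
    (p : MvPolynomial (Fin n) ℝ)
    (hp : p = ∑ j, pderiv j b * f j)
    (q : Fin m → MvPolynomial (Fin n) ℝ)
    (hq : ∀ i, q i = ∑ j, pderiv j b * g j i)
    (η : MvPolynomial (Fin n) ℝ)
    (θ : Fin m → MvPolynomial (Fin n) ℝ)
    (α₀ α₁ : MvPolynomial (Fin n) ℝ) (hα₀ : IsSOS α₀) (hα₁ : IsSOS α₁)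
    (r : ℕ) (hr : 0 < r)
    (hid : η * b + ∑ i, θ i * q i + α₀ - α₁ * p + p ^ (2 * r) = 0) :
    (¬ ∃ x : Fin n → ℝ, eval x b = 0 ∧ (∀ i, eval x (q i) = 0) ∧ eval x p < 0) ∧
      (∀ x : Fin n → ℝ, eval x b = 0 →
        ∃ u : Fin m → ℝ, 0 ≤ eval x p + ∑ i, eval x (q i) * u i) := by
  have key : ¬ ∃ x : Fin n → ℝ, eval x b = 0 ∧ (∀ i, eval x (q i) = 0) ∧ eval x p < 0 := by
    rintro ⟨x, hb, hqx, hpx⟩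
    have h := congrArg (eval x) hid
    simp only [map_add, map_sub, map_mul, map_sum, map_pow, map_zero, hb, hqx, mul_zero,
      Finset.sum_const_zero, zero_add] at h
    have h0 := hα₀.eval_nonneg_aux x
    have h1 := mul_nonneg (hα₁.eval_nonneg_aux x) (neg_nonneg.mpr hpx.le)
    have h2 : 0 < (eval x p) ^ (2 * r) := by
      rw [pow_mul]
      exact pow_pos (sq_pos_of_neg hpx) r
    linarith
  refine ⟨key, fun x hb => ?_⟩
  by_cases hqx : ∀ i, eval x (q i) = 0
  · refine ⟨0, ?_⟩
    have : 0 ≤ eval x p := not_lt.mp fun hlt => key ⟨x, hb, hqx, hlt⟩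
    simpa using this
  · push Not at hqx
    obtain ⟨i, hi⟩ := hqx
    refine ⟨Pi.single i (-(eval x p) / eval x (q i)), le_of_eq ?_⟩
    rw [Finset.sum_eq_single i]
    · rw [Pi.single_eq_same]
      field_simp
      ring
    · intro j _ hj
      rw [Pi.single_eq_of_ne hj, mul_zero]
    · simp
end

section
/- Let ψ_0,…,ψ_{r−1}, f_1,…,f_n, and g_{j,i} (1 ≤ j ≤ n, 1 ≤ i ≤ m) be real polynomials in n variables, let k > 0, and define p := Σ_{j=1}^n (∂ψ_{r−1}/∂x_j)·f_j + k·ψ_{r−1} and q_i := Σ_{j=1}^n (∂ψ_{r−1}/∂x_j)·g_{j,i}. Suppose there exist polynomials θ_1,…,θ_m, sum-of-squares polynomials α, γ_0,…,γ_{r−1}, Λ, and a real number ρ ≤ 0 such that the polynomial α·p + Σ_{i=1}^m θ_i·q_i − Σ_{i=0}^{r−1} γ_i·ψ_i + ρ·Λ − 1 is a sum of squares. Then there is no x ∈ ℝ^n satisfying ψ_i(x) ≥ 0 for all i = 0,…,r−1, q_i(x) = 0 for all i = 1,…,m, and p(x) ≤ 0; consequently, for every x ∈ ∩_{i=0}^{r−1}{ψ_i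 ≥ 0} there exists u ∈ ℝ^m with p(x) + Σ_{i=1}^m q_i(x)·u_i ≥ 0. -/
open MvPolynomial

/-- Theorem 7: the first SOS constraint of program (11) with `ρ ≤ 0` certifies
HOCBF feasibility throughout `∩_i C_i`. Here `r = rm + 1`, so `ψ : Fin (rm + 1)`
stands for `ψ_0, …, ψ_{r-1}` and `ψ (Fin.last rm)` is `ψ_{r-1}`. -/
theorem hocbf_synthesis_first_constraint_feasible
    (n m rm : ℕ)
    (ψ : Fin (rm + 1) → MvPolynomial (Fin n) ℝ)
    (f : Fin n → MvPolynomial (Fin n) ℝ)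
    (g : Fin n → Fin m → MvPolynomial (Fin n) ℝ)
    (k : ℝ) (hk : 0 < k)
    (p : MvPolynomial (Fin n) ℝ)
    (hp : p = ∑ j, pderiv j (ψ (Fin.last rm)) * f j + C k * ψ (Fin.last rm))
    (q : Fin m → MvPolynomial (Fin n) ℝ)
    (hq : ∀ i, q i = ∑ j, pderiv j (ψ (Fin.last rm)) * g j i)
    (θ : Fin m → MvPolynomial (Fin n) ℝ)
    (α Λ : MvPolynomial (Fin n) ℝ) (hα : IsSOS α) (hΛ : IsSOS Λ)
    (γ : Fin (rm + 1) → MvPolynomial (Fin n) ℝ) (hγ : ∀ i, IsSOS (γ i))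
    (ρ : ℝ) (hρ : ρ ≤ 0)
    (hcert : IsSOS (α * p + ∑ i, θ i * q i - ∑ i, γ i * ψ i + C ρ * Λ - 1)) :
    (¬ ∃ x : Fin n → ℝ,
        (∀ i, 0 ≤ eval x (ψ i)) ∧ (∀ i, eval x (q i) = 0) ∧ eval x p ≤ 0) ∧
      (∀ x : Fin n → ℝ, (∀ i, 0 ≤ eval x (ψ i)) →
        ∃ u : Fin m → ℝ, 0 ≤ eval x p + ∑ i, eval x (q i) * u i) := by
  have key : ¬ ∃ x : Fin n → ℝ,
      (∀ i, 0 ≤ eval x (ψ i)) ∧ (∀ i, eval x (q i) = 0) ∧ eval x p ≤ 0 := by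
    rintro ⟨x, h1, h2, h3⟩
    have h := hcert.eval_nonneg_aux x
    simp only [map_sub, map_add, map_mul, map_sum, map_one, eval_C, h2, mul_zero,
      Finset.sum_const_zero, add_zero] at h
    have a1 := mul_nonpos_of_nonneg_of_nonpos (hα.eval_nonneg_aux x) h3
    have a2 : 0 ≤ ∑ i, eval x (γ i) * eval x (ψ i) :=
      Finset.sum_nonneg fun i _ => mul_nonneg ((hγ i).eval_nonneg_aux x) (h1 i)
    have a3 := mul_nonpos_of_nonpos_of_nonneg hρ (hΛ.eval_nonneg_aux x)
    linarith
  refine ⟨key, fun x hx => ?_⟩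
  by_cases hz : ∀ i, eval x (q i) = 0
  · refine ⟨0, ?_⟩
    by_contra hc
    refine key ⟨x, hx, hz, ?_⟩
    simp at hc
    exact hc.le
  · push Not at hz
    obtain ⟨i, hi⟩ := hz
    refine ⟨Pi.single i (-(eval x p) / eval x (q i)), ?_⟩
    have : ∑ j, eval x (q j) * (Pi.single i (-(eval x p) / eval x (q i)) : Fin m → ℝ) j
        = -(eval x p) := by
      rw [Finset.sum_eq_single i]
      · rw [Pi.single_eq_same]; field_simp
      · intro j _ hj
        rw [Pi.single_eq_of_ne hj, mul_zero]
      · simp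
    rw [this]; simp
end
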